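/- Fourth-order two-body error term (paper eq. A17a): for i ≠ j and any phase-space point (x,p) with r_ij ≠ 0, the left-nested canonical Poisson bracket satisfies {{{{V_ij, T}, T}, T}, T}(x,p) = −3 (G (m i)(m j) / r_ij⁹) · ( 35 (v_ij · x_ij)⁴ − 30 r_ij² ‖v_ij‖² (v_ij · x_ij)² + 3 r_ij⁴ ‖v_ij‖⁴ ). -/

import Mathlib

open scoped RealInnerProductSpace BigOperators

noncomputable section

/-- Three-dimensional Euclidean space. -/
abbrev E3 : Type := EuclideanSpace ℝ (Fin 3)

/-- Phase space for `N` particles: positions and momenta. -/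
abbrev Phase (N : ℕ) : Type := (Fin N → E3) × (Fin N → E3)

/-- Gradient of a phase-space function with respect to the `k`-th position. -/
def gradPos {N : ℕ} (A : Phase N → ℝ) (k : Fin N) (w : Phase N) : E3 :=
  gradient (fun y => A (Function.update w.1 k y, w.2)) (w.1 k)

/-- Gradient of a phase-space function with respect to the `k`-th momentum. -/
def gradMom {N : ℕ} (A : Phase N → ℝ) (k : Fin N) (w : Phase N) : E3 :=
  gradient (fun y => A (w.1, Function.update w.2 k y)) (w.2 k)

/-- Canonical Poisson bracket of two phase-space functions. -/
def poisson {N : ℕ} (A B : Phase N → ℝ) (w : Phase N) : ℝ :=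
  ∑ k, (⟪gradPos A k w, gradMom B k w⟫ - ⟪gradMom A k w, gradPos B k w⟫)

/-- Kinetic energy `T = Σ_i ‖p_i‖²/(2 m_i)`. -/
def kinetic {N : ℕ} (m : Fin N → ℝ) (w : Phase N) : ℝ :=
  ∑ i, ‖w.2 i‖ ^ 2 / (2 * m i)

/-- Pair potential `V_ij = −G m_i m_j / ‖x_i − x_j‖`. -/
def pairPot {N : ℕ} (G : ℝ) (m : Fin N → ℝ) (i j : Fin N) (w : Phase N) : ℝ :=
  -(G * m i * m j) / ‖w.1 i - w.1 j‖

/-!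
The kinetic energy generates free motion, so the `n`-fold bracket of `A` with `T` is the `n`-th time
derivative of `A` along straight lines. For the pair potential this leaves the derivatives of
`f t = ‖x + t v‖⁻¹`. As `f` is the generating function of the Legendre polynomials, its derivatives
satisfy Bonnet's recursion, which is obtained by differentiating `‖x + t v‖² f² = 1` repeatedly;
four steps of it produce the Legendre polynomial `P₄`.
-/

open Topology

lemma hasDerivAt_iteratedDeriv {𝕜 F : Type*} [NontriviallyNormedField 𝕜] [NormedAddCommGroup F]
    [NormedSpace 𝕜 F] {f : 𝕜 → F} {n : ℕ} {t : 𝕜} (hf : ContDiffAt 𝕜 (n + 1) f t) :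
    HasDerivAt (iteratedDeriv n f) (iteratedDeriv (n + 1) f t) t := by
  have hlt : (n : WithTop ℕ∞) < n + 1 := by norm_cast; exact n.lt_succ_self
  have hdiff : DifferentiableAt 𝕜 (iteratedDeriv n f) t :=
    (hf.differentiableAt_iteratedFDeriv hlt).continuousMultilinear_apply_const fun _ => 1
  rw [iteratedDeriv_succ]
  exact hdiff.hasDerivAt

section StraightLine

variable {F : Type*} [NormedAddCommGroup F] [NormedSpace ℝ F]

lemma hasDerivAt_add_smul (x v : F) (t : ℝ) : HasDerivAt (fun s : ℝ => x + s • v) v t := by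
  simpa using ((hasDerivAt_id t).smul_const v).const_add x

lemma eventually_add_smul_ne_zero {x v : F} {t : ℝ} (ht : x + t • v ≠ 0) :
    ∀ᶠ s in 𝓝 t, x + s • v ≠ 0 :=
  (hasDerivAt_add_smul x v t).continuousAt.eventually_ne ht

end StraightLine

section InverseDistance

variable {E : Type*} [NormedAddCommGroup E] [InnerProductSpace ℝ E] {x v : E} {t : ℝ}

/-- The Newtonian potential `1 / r` seen by a point moving with constant velocity `v` from `x`, as a
function of time. At a collision `x + t v = 0` it takes the junk value `0`. -/
def lineInvNorm (x v : E) (t : ℝ) : ℝ :=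
  ‖x + t • v‖⁻¹

lemma contDiffAt_lineInvNorm {n : WithTop ℕ∞} (ht : x + t • v ≠ 0) :
    ContDiffAt ℝ n (lineInvNorm x v) t := by
  have hline : ContDiffAt ℝ n (fun s : ℝ => x + s • v) t := by fun_prop
  exact (hline.norm ℝ ht).inv (norm_ne_zero_iff.mpr ht)

lemma hasDerivAt_iteratedDeriv_lineInvNorm (n : ℕ) (ht : x + t • v ≠ 0) :
    HasDerivAt (iteratedDeriv n (lineInvNorm x v)) (iteratedDeriv (n + 1) (lineInvNorm x v) t) t :=
  hasDerivAt_iteratedDeriv (contDiffAt_lineInvNorm ht)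

lemma hasDerivAt_norm_sq_add_smul (x v : E) (t : ℝ) :
    HasDerivAt (fun s : ℝ => ‖x + s • v‖ ^ 2) (2 * ⟪v, x + t • v⟫) t := by
  simpa only [real_inner_comm] using (hasDerivAt_add_smul x v t).norm_sq

lemma hasDerivAt_inner_add_smul (x v : E) (t : ℝ) :
    HasDerivAt (fun s : ℝ => ⟪v, x + s • v⟫) (‖v‖ ^ 2) t := by
  simpa using (hasDerivAt_const t v).inner ℝ (hasDerivAt_add_smul x v t)

lemma norm_sq_mul_deriv_lineInvNorm (ht : x + t • v ≠ 0) :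
    ‖x + t • v‖ ^ 2 * deriv (lineInvNorm x v) t + ⟪v, x + t • v⟫ * lineInvNorm x v t = 0 := by
  have hf := ((contDiffAt_lineInvNorm ht).differentiableAt one_ne_zero).hasDerivAt
  have hone : (fun s => ‖x + s • v‖ ^ 2 * lineInvNorm x v s ^ 2) =ᶠ[𝓝 t] fun _ => 1 := by
    filter_upwards [eventually_add_smul_ne_zero ht] with s hs
    have := norm_ne_zero_iff.mpr hs
    simp only [lineInvNorm]
    field_simp
  have hzero := ((hasDerivAt_norm_sq_add_smul x v t).fun_mul (hf.fun_pow 2)).unique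
    ((hasDerivAt_const t (1 : ℝ)).congr_of_eventuallyEq hone)
  have hne : lineInvNorm x v t ≠ 0 := inv_ne_zero (norm_ne_zero_iff.mpr ht)
  refine mul_left_cancel₀ (mul_ne_zero two_ne_zero hne) ?_
  linear_combination hzero

/-- At `n = 0` the truncated index `n - 1` is harmless, since its coefficient vanishes. -/
lemma bonnet_iteratedDeriv_lineInvNorm (n : ℕ) (ht : x + t • v ≠ 0) :
    ‖x + t • v‖ ^ 2 * iteratedDeriv (n + 1) (lineInvNorm x v) t
      + (2 * n + 1) * ⟪v, x + t • v⟫ * iteratedDeriv n (lineInvNorm x v) t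
      + n ^ 2 * ‖v‖ ^ 2 * iteratedDeriv (n - 1) (lineInvNorm x v) t = 0 := by
  induction n generalizing t with
  | zero => simpa using norm_sq_mul_deriv_lineInvNorm ht
  | succ n ih =>
    have hprev : HasDerivAt
        (fun s => n ^ 2 * ‖v‖ ^ 2 * iteratedDeriv (n - 1) (lineInvNorm x v) s)
        (n ^ 2 * ‖v‖ ^ 2 * iteratedDeriv n (lineInvNorm x v) t) t := by
      cases n with
      | zero => simpa using hasDerivAt_const t (0 : ℝ)
      | succ k => exact (hasDerivAt_iteratedDeriv_lineInvNorm k ht).const_mul _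
    have hsum := (((hasDerivAt_norm_sq_add_smul x v t).fun_mul
      (hasDerivAt_iteratedDeriv_lineInvNorm (n + 1) ht)).fun_add
      (((hasDerivAt_inner_add_smul x v t).const_mul (2 * (n : ℝ) + 1)).fun_mul
        (hasDerivAt_iteratedDeriv_lineInvNorm n ht))).fun_add hprev
    have hzero := hsum.unique ((hasDerivAt_const t (0 : ℝ)).congr_of_eventuallyEq
      ((eventually_add_smul_ne_zero ht).mono fun s hs => ih hs))
    rw [Nat.add_sub_cancel]
    push_cast
    linear_combination hzero

lemma iteratedDeriv_four_lineInvNorm_zero (hx : x ≠ 0) :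
    iteratedDeriv 4 (lineInvNorm x v) 0 =
      3 / ‖x‖ ^ 9 * (35 * ⟪v, x⟫ ^ 4 - 30 * ‖x‖ ^ 2 * ‖v‖ ^ 2 * ⟪v, x⟫ ^ 2
        + 3 * ‖x‖ ^ 4 * ‖v‖ ^ 4) := by
  have hr : ‖x‖ ≠ 0 := norm_ne_zero_iff.mpr hx
  have bonnet (n : ℕ) : iteratedDeriv (n + 1) (lineInvNorm x v) 0 =
      -((2 * n + 1) * ⟪v, x⟫ * iteratedDeriv n (lineInvNorm x v) 0
        + n ^ 2 * ‖v‖ ^ 2 * iteratedDeriv (n - 1) (lineInvNorm x v) 0) / ‖x‖ ^ 2 := by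
    have h := bonnet_iteratedDeriv_lineInvNorm (x := x) (v := v) (t := 0) n (by simpa using hx)
    rw [zero_smul, add_zero] at h
    rw [eq_div_iff (pow_ne_zero 2 hr)]
    linear_combination h
  have hderiv₀ : iteratedDeriv 0 (lineInvNorm x v) 0 = ‖x‖⁻¹ := by simp [lineInvNorm]
  have hderiv₁ : iteratedDeriv 1 (lineInvNorm x v) 0 = -⟪v, x⟫ / ‖x‖ ^ 3 := by
    rw [bonnet 0, hderiv₀]
    field_simp
    push_cast
    ring
  have hderiv₂ : iteratedDeriv 2 (lineInvNorm x v) 0 =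
      (3 * ⟪v, x⟫ ^ 2 - ‖x‖ ^ 2 * ‖v‖ ^ 2) / ‖x‖ ^ 5 := by
    rw [bonnet 1, hderiv₁, Nat.sub_self, hderiv₀]
    field_simp
    push_cast
    ring
  have hderiv₃ : iteratedDeriv 3 (lineInvNorm x v) 0 =
      (9 * ‖x‖ ^ 2 * ‖v‖ ^ 2 * ⟪v, x⟫ - 15 * ⟪v, x⟫ ^ 3) / ‖x‖ ^ 7 := by
    rw [bonnet 2, hderiv₂, Nat.add_sub_cancel 1 1, hderiv₁]
    field_simp
    push_cast
    ring
  rw [bonnet 3, hderiv₃, Nat.add_sub_cancel 2 1, hderiv₂]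
  field_simp
  push_cast
  ring

end InverseDistance

section KineticBracket

variable {N : ℕ} {A : Phase N → ℝ} {w : Phase N} (m : Fin N → ℝ)

lemma inner_gradPos (hA : DifferentiableAt ℝ A w) (k : Fin N) (u : E3) :
    ⟪gradPos A k w, u⟫ = fderiv ℝ A w (Pi.single k u, 0) := by
  have hupdate : HasFDerivAt (fun y : E3 => ((Function.update w.1 k y, w.2) : Phase N))
      ((ContinuousLinearMap.pi (Pi.single k (.id ℝ E3))).prod 0) (w.1 k) :=
    (hasFDerivAt_update w.1 (w.1 k)).prodMk (hasFDerivAt_const w.2 (w.1 k))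
  have hcomp := HasFDerivAt.comp (w.1 k) (by simpa using hA.hasFDerivAt) hupdate
  rw [gradPos, inner_gradient_left, ← Function.comp_def, hcomp.fderiv]
  refine congrArg (fderiv ℝ A w) (Prod.ext (funext fun i => ?_) rfl)
  rcases eq_or_ne i k with rfl | hik
  · simp
  · simp [hik]

lemma gradPos_kinetic (k : Fin N) (w : Phase N) : gradPos (kinetic m) k w = 0 := by
  simp [gradPos, kinetic]

lemma kinetic_update (x p : Fin N → E3) (k : Fin N) (y : E3) :
    kinetic m (x, Function.update p k y) =
      ‖y‖ ^ 2 / (2 * m k) + ∑ i ∈ Finset.univ.erase k, ‖p i‖ ^ 2 / (2 * m i) := by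
  simp only [kinetic]
  rw [← Finset.add_sum_erase _ _ (Finset.mem_univ k), Function.update_self]
  congr 1
  refine Finset.sum_congr rfl fun i hi => ?_
  rw [Function.update_of_ne (Finset.ne_of_mem_erase hi)]

lemma gradMom_kinetic (k : Fin N) (w : Phase N) :
    gradMom (kinetic m) k w = (m k)⁻¹ • w.2 k := by
  refine ext_inner_right ℝ fun u => ?_
  simp_rw [gradMom, inner_gradient_left, kinetic_update, div_eq_mul_inv, fderiv_add_const]
  rw [((hasStrictFDerivAt_norm_sq (w.2 k)).hasFDerivAt.mul_const _).fderiv]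
  simp only [mul_inv_rev, smul_apply, coe_innerSL_apply, nsmul_eq_mul, Nat.cast_ofNat,
    smul_eq_mul, real_inner_smul_left]
  ring

/-- The velocities `p_k / m_k` of the particles. A massless particle gets the junk value `0`, which
matches the junk value `0` of its kinetic energy. -/
def velocity (w : Phase N) : Fin N → E3 :=
  fun k => (m k)⁻¹ • w.2 k

/-- The flow of the kinetic energy: after time `t` each particle has moved along a straight line at
its constant velocity. -/
def freeMotion (w : Phase N) (t : ℝ) : Phase N :=
  (w.1 + t • velocity m w, w.2)

lemma poisson_kinetic (hA : DifferentiableAt ℝ A w) :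
    poisson A (kinetic m) w = fderiv ℝ A w (velocity m w, 0) := by
  calc poisson A (kinetic m) w
      = ∑ k, fderiv ℝ A w (Pi.single k (velocity m w k), 0) := by
        simp only [poisson, gradPos_kinetic, gradMom_kinetic, inner_zero_right, sub_zero,
          inner_gradPos hA, velocity]
    _ = fderiv ℝ A w (velocity m w, 0) := by
        rw [← map_sum]
        congr 1
        ext1
        · rw [Prod.fst_sum, Finset.univ_sum_single]
        · rw [Prod.snd_sum, Finset.sum_const_zero]

lemma hasDerivAt_comp_freeMotion {t : ℝ} (hA : DifferentiableAt ℝ A (freeMotion m w t)) :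
    HasDerivAt (fun s => A (freeMotion m w s)) (poisson A (kinetic m) (freeMotion m w t)) t := by
  have hmotion : HasDerivAt (freeMotion m w) (velocity m w, 0) t :=
    (hasDerivAt_add_smul w.1 (velocity m w) t).prodMk (hasDerivAt_const t w.2)
  rw [poisson_kinetic m hA]
  exact hA.hasFDerivAt.comp_hasDerivAt t hmotion

lemma contDiffAt_poisson_kinetic {n : ℕ} (hA : ContDiffAt ℝ (n + 1) A w) :
    ContDiffAt ℝ n (poisson A (kinetic m)) w := by
  have hvel : ContDiff ℝ n fun z : Phase N => (velocity m z, (0 : Fin N → E3)) := by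
    unfold velocity; fun_prop
  refine (hA.fderiv_right_succ.clm_apply hvel.contDiffAt).congr_of_eventuallyEq ?_
  filter_upwards [hA.eventually (by simp)] with z hz
  exact poisson_kinetic m (hz.differentiableAt (by simp))

theorem iterate_poisson_kinetic (n : ℕ) (hA : ContDiffAt ℝ n A w) :
    (fun B => poisson B (kinetic m))^[n] A w =
      iteratedDeriv n (fun t => A (freeMotion m w t)) 0 := by
  have hstart : freeMotion m w 0 = w := by simp [freeMotion]
  induction n generalizing A with
  | zero => simp [hstart]
  | succ n ih =>
    push_cast at hA
    have hcont : ContinuousAt (freeMotion m w) 0 := by unfold freeMotion; fun_prop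
    have hderiv : (fun t => poisson A (kinetic m) (freeMotion m w t)) =ᶠ[𝓝 0]
        deriv fun t => A (freeMotion m w t) := by
      have hsmooth := hcont.eventually (hstart.symm ▸ hA.eventually (by simp))
      filter_upwards [hsmooth] with t ht
      exact (hasDerivAt_comp_freeMotion m (ht.differentiableAt (by simp))).deriv.symm
    rw [Function.iterate_succ_apply, ih (contDiffAt_poisson_kinetic m hA), iteratedDeriv_succ',
      hderiv.iteratedDeriv_eq]

end KineticBracket

section PairPotential

variable {N : ℕ} (G : ℝ) (m : Fin N → ℝ) {i j : Fin N} {w : Phase N}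

lemma contDiffAt_pairPot {n : WithTop ℕ∞} (hr : w.1 i - w.1 j ≠ 0) :
    ContDiffAt ℝ n (pairPot G m i j) w := by
  have hrel : ContDiffAt ℝ n (fun z : Phase N => z.1 i - z.1 j) w := by fun_prop
  exact contDiffAt_const.div (hrel.norm ℝ hr) (norm_ne_zero_iff.mpr hr)

lemma pairPot_freeMotion (i j : Fin N) (w : Phase N) (t : ℝ) :
    pairPot G m i j (freeMotion m w t) =
      -(G * m i * m j) * lineInvNorm (w.1 i - w.1 j) (velocity m w i - velocity m w j) t := by
  have hrel : (freeMotion m w t).1 i - (freeMotion m w t).1 j =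
      w.1 i - w.1 j + t • (velocity m w i - velocity m w j) := by
    simp only [freeMotion, Pi.add_apply, Pi.smul_apply]
    module
  rw [pairPot, hrel, div_eq_mul_inv, lineInvNorm]

theorem iterate_poisson_kinetic_pairPot (n : ℕ) (hr : w.1 i - w.1 j ≠ 0) :
    (fun B => poisson B (kinetic m))^[n] (pairPot G m i j) w =
      -(G * m i * m j) *
        iteratedDeriv n (lineInvNorm (w.1 i - w.1 j) (velocity m w i - velocity m w j)) 0 := by
  simp_rw [iterate_poisson_kinetic m n (contDiffAt_pairPot G m hr), pairPot_freeMotion,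
    iteratedDeriv_const_mul_field]

end PairPotential

/-- Fourth-order two-body error term (paper eq. A17a):
`{{{{V_ij,T},T},T},T} = −3 (G m_i m_j / r_ij⁹)
  (35 (v_ij·x_ij)⁴ − 30 r_ij² v_ij² (v_ij·x_ij)² + 3 r_ij⁴ v_ij⁴)`. -/
theorem fourth_order_VTTTT {N : ℕ} (G : ℝ) (hG : 0 < G) (m : Fin N → ℝ)
    (hm : ∀ i, 0 < m i) (i j : Fin N) (hij : i ≠ j) (w : Phase N)
    (hr : ‖w.1 i - w.1 j‖ ≠ 0) (xij vij : E3)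
    (hx : xij = w.1 i - w.1 j)
    (hv : vij = (m i)⁻¹ • w.2 i - (m j)⁻¹ • w.2 j) :
    poisson (poisson (poisson (poisson (pairPot G m i j) (kinetic m))
        (kinetic m)) (kinetic m)) (kinetic m) w =
      -3 * (G * m i * m j / ‖xij‖ ^ 9) *
        (35 * ⟪vij, xij⟫ ^ 4 -
          30 * ‖xij‖ ^ 2 * ‖vij‖ ^ 2 * ⟪vij, xij⟫ ^ 2 +
          3 * ‖xij‖ ^ 4 * ‖vij‖ ^ 4) := by
  have hx₀ : xij ≠ 0 := hx ▸ norm_ne_zero_iff.mp hr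
  calc poisson (poisson (poisson (poisson (pairPot G m i j) (kinetic m))
          (kinetic m)) (kinetic m)) (kinetic m) w
      = (fun B => poisson B (kinetic m))^[4] (pairPot G m i j) w := rfl
    _ = -(G * m i * m j) * iteratedDeriv 4 (lineInvNorm xij vij) 0 := by
        rw [hx, hv, iterate_poisson_kinetic_pairPot G m 4 (norm_ne_zero_iff.mp hr)]
        rfl
    _ = _ := by
        rw [iteratedDeriv_four_lineInvNorm_zero hx₀]
        ring
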